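/- Let β ∈ (0,2], n ∈ ℕ, define φ₁(λ) = log(1 + λ^{β/2}), φ_{k+1} = φ₁ ∘ φ_k, and ψ_n(λ) = λ/φ_n(λ), and let ν_n : (0,∞) → (0,∞) be a decreasing function with ψ_n(λ) − ψ_n(0+) = ∫_0^∞ (1 − e^{−λt}) ν_n(t) dt for all λ > 0. For an integer d ≥ 3, define j(r) = ∫_0^∞ (4πt)^{−d/2} e^{−r²/(4t)} ν_n(t) dt. Then j(r) ≍ r^{−d−2} (log_n(1/r))^{−2} · ∏_{k=1}^{n−1} (log_k(1/r))^{−1} as r → 0+ (the product being 1 when n = 1). -/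

import Mathlib

open MeasureTheory Set Filter Topology

/-- Iterated geometric stable Laplace exponents: `phiIter β 1 λ = log(1 + λ^{β/2})` and
`phiIter β (n+1) = phiIter β 1 ∘ phiIter β n`. -/
noncomputable def phiIter (β : ℝ) : ℕ → ℝ → ℝ
  | 0, l => l
  | n + 1, l => Real.log (1 + phiIter β n l ^ (β / 2))

/-- Iterated logarithms: `iterLog 1 = log`, `iterLog (k+1) = log ∘ iterLog k`. -/
noncomputable def iterLog : ℕ → ℝ → ℝ
  | 0, x => x
  | n + 1, x => Real.log (iterLog n x)


/-!
If `ψ` is a Laplace exponent with decreasing Lévy density `ν`, then `2ψ(l) - ψ(2l)` is, up to the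
killing rate, the integral `S(l) = ∫ (1 - e^{-lt})² ν(t) dt`, whose integrand is quadratic near `0`.
For `ψ = λ / φ_n` it is comparable to `l G(l)`, where `G` is the product of inverse iterated
logarithms: doubling `λ` changes `φ_n(λ)` by about `∏_{k<n} (log_k λ)⁻¹`. All that is used about `G`
is that it is decreasing and comparable to `l ↦ G(l²)`.

Since `ν` is decreasing, `t ν(t) ≲ S(1/t)`, so `ν(t) ≲ t⁻² G(1/t)`. Conversely, this bound and the
tail bound `∫_b^∞ ν ≲ S(1/b)` show that `t < ε/l` and `t > 1/(εl)` contribute only `O(ε) l G(l)` to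
`S(l)`; for small `ε` the range between them has to carry the rest, and there `ν ≤ ν(ε/l)`. Hence
`ν(t) ≍ t⁻² G(1/t)`. Finally, the heat kernel integral defining `j(r)` concentrates at `t ≍ r²`.
-/

open Asymptotics

section LogAsymptotics

variable {α : Type*} {l : Filter α} {f g : α → ℝ}

lemma isEquivalent_log_of_isTheta (h : f =Θ[l] g) (hf : Tendsto f l atTop)
    (hg : Tendsto g l atTop) :
    (fun x => Real.log (f x)) ~[l] fun x => Real.log (g x) := by
  obtain ⟨C, hC, hfg⟩ := h.1.exists_pos
  obtain ⟨D, hD, hgf⟩ := h.2.exists_pos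
  have hdiff : (fun x => Real.log (f x) - Real.log (g x)) =O[l] fun _ => (1 : ℝ) := by
    refine IsBigO.of_bound (max (Real.log C) (Real.log D)) ?_
    filter_upwards [hfg.bound, hgf.bound, hf.eventually_gt_atTop 0, hg.eventually_gt_atTop 0]
      with x hfx hgx hf0 hg0
    rw [Real.norm_of_nonneg hf0.le, Real.norm_of_nonneg hg0.le] at hfx hgx
    have hle := Real.log_le_log hf0 hfx
    have hge := Real.log_le_log hg0 hgx
    rw [Real.log_mul hC.ne' hg0.ne'] at hle
    rw [Real.log_mul hD.ne' hf0.ne'] at hge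
    rw [norm_one, mul_one, Real.norm_eq_abs, abs_le]
    constructor
    · linarith [le_max_right (Real.log C) (Real.log D)]
    · linarith [le_max_left (Real.log C) (Real.log D)]
  have hlog : Tendsto (fun x => Real.log (g x)) l atTop := Real.tendsto_log_atTop.comp hg
  exact hdiff.trans_isLittleO
    (isLittleO_const_left.2 (Or.inr (tendsto_norm_atTop_atTop.comp hlog)))

lemma log_one_add_sub_le_log_sub {u v : ℝ} (hu : 0 < u) (huv : u ≤ v) :
    Real.log (1 + v) - Real.log (1 + u) ≤ Real.log v - Real.log u := by
  have hv : 0 < v := hu.trans_le huv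
  rw [← Real.log_div (by positivity) (by positivity), ← Real.log_div hv.ne' hu.ne']
  refine Real.log_le_log (by positivity) ?_
  rw [div_le_div_iff₀ (by positivity) hu]
  linarith

lemma log_sub_le_two_mul_log_one_add_sub {u v : ℝ} (hu : 1 ≤ u) (huv : u ≤ v) :
    Real.log v - Real.log u ≤ 2 * (Real.log (1 + v) - Real.log (1 + u)) := by
  have hv : 1 ≤ v := hu.trans huv
  have hsq : v / u ≤ ((1 + v) / (1 + u)) ^ 2 := by
    rw [div_pow, div_le_div_iff₀ (by positivity) (by positivity)]
    nlinarith [mul_nonneg (sub_nonneg.2 (one_le_mul_of_one_le_of_one_le hv hu))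
      (sub_nonneg.2 huv)]
  calc Real.log v - Real.log u = Real.log (v / u) :=
        (Real.log_div (by positivity) (by positivity)).symm
    _ ≤ Real.log (((1 + v) / (1 + u)) ^ 2) := Real.log_le_log (by positivity) hsq
    _ = 2 * (Real.log (1 + v) - Real.log (1 + u)) := by
        rw [Real.log_pow, Real.log_div (by positivity) (by positivity), Nat.cast_ofNat]

lemma isTheta_log_sub_log (hf : ∀ᶠ x in l, 0 < f x) (hfg : ∀ᶠ x in l, f x ≤ g x)
    (hgf : g =O[l] f) :
    (fun x => Real.log (g x) - Real.log (f x)) =Θ[l] fun x => (g x - f x) / f x := by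
  constructor
  · refine IsBigO.of_bound 1 ?_
    filter_upwards [hf, hfg] with x hfx hfgx
    have hlog : Real.log (f x) ≤ Real.log (g x) := Real.log_le_log hfx hfgx
    have hle := Real.log_le_sub_one_of_pos (div_pos (hfx.trans_le hfgx) hfx)
    rw [Real.log_div (hfx.trans_le hfgx).ne' hfx.ne'] at hle
    rw [Real.norm_of_nonneg (sub_nonneg.2 hlog),
      Real.norm_of_nonneg (div_nonneg (sub_nonneg.2 hfgx) hfx.le), one_mul, sub_div,
      div_self hfx.ne']
    exact hle
  · obtain ⟨C, hC, hgC⟩ := hgf.exists_pos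
    refine IsBigO.of_bound C ?_
    filter_upwards [hf, hfg, hgC.bound] with x hfx hfgx hgx
    have hgx0 : 0 < g x := hfx.trans_le hfgx
    have hlog : Real.log (f x) ≤ Real.log (g x) := Real.log_le_log hfx hfgx
    have hge := Real.one_sub_inv_le_log_of_pos (div_pos hgx0 hfx)
    rw [Real.log_div hgx0.ne' hfx.ne', inv_div] at hge
    rw [Real.norm_of_nonneg hgx0.le, Real.norm_of_nonneg hfx.le] at hgx
    rw [Real.norm_of_nonneg (sub_nonneg.2 hlog),
      Real.norm_of_nonneg (div_nonneg (sub_nonneg.2 hfgx) hfx.le)]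
    calc (g x - f x) / f x ≤ C * ((g x - f x) / g x) := by
          rw [div_le_iff₀ hfx, mul_assoc, div_mul_eq_mul_div, ← mul_div_assoc, le_div_iff₀ hgx0]
          linarith [mul_le_mul_of_nonneg_left hgx (sub_nonneg.2 hfgx)]
      _ = C * (1 - f x / g x) := by rw [sub_div, div_self hgx0.ne']
      _ ≤ C * (Real.log (g x) - Real.log (f x)) := by gcongr

lemma isTheta_log_one_add_rpow_sub {a : ℝ} (ha : 0 < a) (hf : ∀ᶠ x in l, 1 ≤ f x)
    (hfg : ∀ᶠ x in l, f x ≤ g x) (hgf : g =O[l] f) :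
    (fun x => Real.log (1 + g x ^ a) - Real.log (1 + f x ^ a)) =Θ[l]
      fun x => (g x - f x) / f x := by
  have hpos : ∀ᶠ x in l, 0 < f x := hf.mono fun x hx => one_pos.trans_le hx
  have hpow : ∀ᶠ x in l, 1 ≤ f x ^ a ∧ f x ^ a ≤ g x ^ a ∧
      Real.log (g x ^ a) - Real.log (f x ^ a) = a * (Real.log (g x) - Real.log (f x)) := by
    filter_upwards [hf, hpos, hfg] with x hfx hfx0 hfgx
    refine ⟨Real.one_le_rpow hfx ha.le, Real.rpow_le_rpow hfx0.le hfgx ha.le, ?_⟩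
    rw [Real.log_rpow hfx0, Real.log_rpow (hfx0.trans_le hfgx)]
    ring
  have hscaled : (fun x => Real.log (1 + g x ^ a) - Real.log (1 + f x ^ a)) =Θ[l]
      fun x => a * (Real.log (g x) - Real.log (f x)) := by
    constructor
    · refine IsBigO.of_bound 1 ?_
      filter_upwards [hpow] with x ⟨hfx, hfgx, heq⟩
      have hnonneg : Real.log (1 + f x ^ a) ≤ Real.log (1 + g x ^ a) :=
        Real.log_le_log (by positivity) (by linarith)
      rw [one_mul, Real.norm_of_nonneg (sub_nonneg.2 hnonneg), ← heq]
      exact (log_one_add_sub_le_log_sub (by linarith) hfgx).trans (le_abs_self _)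
    · refine IsBigO.of_bound 2 ?_
      filter_upwards [hpow] with x ⟨hfx, hfgx, heq⟩
      have hnonneg : Real.log (f x ^ a) ≤ Real.log (g x ^ a) :=
        Real.log_le_log (by positivity) hfgx
      rw [← heq, Real.norm_of_nonneg (sub_nonneg.2 hnonneg)]
      exact (log_sub_le_two_mul_log_one_add_sub hfx hfgx).trans
        (mul_le_mul_of_nonneg_left (le_abs_self _) two_pos.le)
  exact (hscaled.trans ((isTheta_const_mul_left ha.ne').2 isTheta_rfl)).trans
    (isTheta_log_sub_log hpos hfg hgf)

end LogAsymptotics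

section IterLog

lemma tendsto_iterLog_atTop (n : ℕ) : Tendsto (iterLog n) atTop atTop := by
  induction n with
  | zero => exact tendsto_id
  | succ n ih => exact Real.tendsto_log_atTop.comp ih

lemma eventually_iterLog_le_iterLog (n : ℕ) :
    ∀ᶠ x in atTop, ∀ y, x ≤ y → iterLog n x ≤ iterLog n y := by
  induction n with
  | zero => exact Eventually.of_forall fun x y hxy => hxy
  | succ n ih =>
    filter_upwards [ih, (tendsto_iterLog_atTop n).eventually_gt_atTop 0] with x hmono hpos y hxy
    exact Real.log_le_log hpos (hmono y hxy)

lemma iterLog_succ_eq_iterLog_log (n : ℕ) (x : ℝ) :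
    iterLog (n + 1) x = iterLog n (Real.log x) := by
  induction n with
  | zero => rfl
  | succ n ih => exact congrArg Real.log ih

lemma iterLog_isBigO_id (n : ℕ) : iterLog n =O[atTop] id := by
  induction n with
  | zero => exact isBigO_refl _ _
  | succ n ih =>
    exact (Real.isLittleO_log_id_atTop.comp_tendsto (tendsto_iterLog_atTop n)).isBigO.trans ih

lemma isTheta_iterLog_comp {α : Type*} {l : Filter α} {f g : α → ℝ} (h : f =Θ[l] g)
    (hf : Tendsto f l atTop) (hg : Tendsto g l atTop) (n : ℕ) :
    (fun x => iterLog n (f x)) =Θ[l] fun x => iterLog n (g x) := by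
  induction n with
  | zero => exact h
  | succ n ih =>
    exact (isEquivalent_log_of_isTheta ih ((tendsto_iterLog_atTop n).comp hf)
      ((tendsto_iterLog_atTop n).comp hg)).isTheta

lemma iterLog_succ_sq_isTheta (n : ℕ) :
    (fun x => iterLog (n + 1) (x ^ 2)) =Θ[atTop] iterLog (n + 1) := by
  have hlog : (fun x : ℝ => Real.log (x ^ 2)) =Θ[atTop] Real.log := by
    simp only [Real.log_pow, Nat.cast_ofNat]
    exact (isTheta_const_mul_left two_ne_zero).2 isTheta_rfl
  rw [funext (iterLog_succ_eq_iterLog_log n)]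
  exact isTheta_iterLog_comp hlog
    (Real.tendsto_log_atTop.comp (tendsto_pow_atTop two_ne_zero)) Real.tendsto_log_atTop n

end IterLog

section LogDecay

lemma sq_induction {P : ℝ → Prop} {b : ℝ} (hb : 1 < b) (base : ∀ x, b ≤ x → x ≤ b ^ 2 → P x)
    (step : ∀ x, b ≤ x → P x → P (x ^ 2)) (x : ℝ) (hx : b ≤ x) : P x := by
  have hbounded : ∀ m : ℕ, ∀ x, b ≤ x → x ≤ b ^ 2 ^ (m + 1) → P x := by
    intro m
    induction m with
    | zero => simpa only [zero_add, pow_one] using base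
    | succ m ih =>
      intro x hbx hxb
      rcases le_total x (b ^ 2) with hsmall | hlarge
      · exact base x hbx hsmall
      · have hsqrt : √x ^ 2 = x := Real.sq_sqrt (by linarith)
        have hbs : b ≤ √x := Real.le_sqrt_of_sq_le hlarge
        rw [← hsqrt]
        refine step _ hbs (ih _ hbs (Real.sqrt_le_iff.2 ⟨by positivity, hxb.trans_eq ?_⟩))
        rw [← pow_mul, ← pow_succ]
  obtain ⟨m, hm⟩ := pow_unbounded_of_one_lt x hb
  refine hbounded m x hx (hm.le.trans (pow_le_pow_right₀ hb.le ?_))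
  exact Nat.lt_two_pow_self.le.trans (Nat.pow_le_pow_right two_pos m.le_succ)

/-- Eventually positive and decreasing functions that lose at most a constant factor when the
argument is squared. Products of negative powers of iterated logarithms are of this kind, and
such functions decay more slowly than any power. -/
structure LogDecay (G : ℝ → ℝ) : Prop where
  eventually_pos : ∀ᶠ x in atTop, 0 < G x
  eventually_anti : ∀ᶠ x in atTop, ∀ y, x ≤ y → G y ≤ G x
  isBigO_sq : G =O[atTop] fun x => G (x ^ 2)

namespace LogDecay

variable {G H : ℝ → ℝ}

lemma const_one : LogDecay fun _ => 1 where
  eventually_pos := Eventually.of_forall fun _ => one_pos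
  eventually_anti := Eventually.of_forall fun _ _ _ => le_rfl
  isBigO_sq := isBigO_refl _ _

lemma mul (hG : LogDecay G) (hH : LogDecay H) : LogDecay fun x => G x * H x where
  eventually_pos := by
    filter_upwards [hG.eventually_pos, hH.eventually_pos] with x using mul_pos
  eventually_anti := by
    filter_upwards [hG.eventually_anti, hH.eventually_anti, hG.eventually_pos,
      eventually_forall_ge_atTop.2 hH.eventually_pos] with x hGx hHx hGpos hHpos y hxy
    exact mul_le_mul (hGx y hxy) (hHx y hxy) (hHpos y hxy).le hGpos.le
  isBigO_sq := hG.isBigO_sq.mul hH.isBigO_sq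

lemma finsetProd {ι : Type*} {F : ι → ℝ → ℝ} {s : Finset ι} (hF : ∀ i ∈ s, LogDecay (F i)) :
    LogDecay fun x => ∏ i ∈ s, F i x := by
  classical
  induction s using Finset.induction_on with
  | empty => simpa only [Finset.prod_empty] using const_one
  | insert i s hi ih =>
    simp only [Finset.prod_insert hi]
    exact (hF i (Finset.mem_insert_self i s)).mul
      (ih fun j hj => hF j (Finset.mem_insert_of_mem hj))

lemma inv_iterLog {n : ℕ} (hn : n ≠ 0) : LogDecay fun x => (iterLog n x)⁻¹ where
  eventually_pos := ((tendsto_iterLog_atTop n).eventually_gt_atTop 0).mono fun _ => inv_pos.2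
  eventually_anti := by
    filter_upwards [eventually_iterLog_le_iterLog n,
      (tendsto_iterLog_atTop n).eventually_gt_atTop 0] with x hmono hpos y hxy
    exact inv_anti₀ hpos (hmono y hxy)
  isBigO_sq := by
    obtain ⟨m, rfl⟩ := Nat.exists_eq_succ_of_ne_zero hn
    exact (iterLog_succ_sq_isTheta m).inv.2

lemma sq_isTheta (hG : LogDecay G) : (fun x => G (x ^ 2)) =Θ[atTop] G := by
  refine ⟨IsBigO.of_bound 1 ?_, hG.isBigO_sq⟩
  filter_upwards [hG.eventually_anti, hG.eventually_pos, eventually_ge_atTop 1,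
    (tendsto_pow_atTop two_ne_zero).eventually hG.eventually_pos] with x hanti hpos hx hpos_sq
  rw [Real.norm_of_nonneg hpos_sq.le, Real.norm_of_nonneg hpos.le, one_mul]
  exact hanti _ (le_self_pow₀ hx two_ne_zero)

lemma exists_le_mul_sq (hG : LogDecay G) : ∃ K > 0, ∀ᶠ x in atTop, G x ≤ K * G (x ^ 2) := by
  obtain ⟨K, hK, hbound⟩ := hG.isBigO_sq.exists_pos
  refine ⟨K, hK, ?_⟩
  filter_upwards [hbound.bound,
    (tendsto_pow_atTop two_ne_zero).eventually hG.eventually_pos] with x hx hpos_sq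
  rw [Real.norm_of_nonneg hpos_sq.le] at hx
  exact (le_abs_self _).trans hx

lemma exists_forall_eventually_comp_mul_le (hG : LogDecay G) :
    ∃ K > 0, ∀ ε > 0, ∀ᶠ x in atTop, G (ε * x) ≤ K * G x := by
  obtain ⟨K, hK, hsq⟩ := hG.exists_le_mul_sq
  refine ⟨K, hK, fun ε hε => ?_⟩
  filter_upwards [(tendsto_id.const_mul_atTop hε).eventually hsq, hG.eventually_anti,
    eventually_ge_atTop (ε ^ 2)⁻¹] with x hsqx hanti hx
  have hle : x ≤ (ε * x) ^ 2 := by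
    have hx0 : 0 < x := (by positivity : 0 < (ε ^ 2)⁻¹).trans_le hx
    have hone : 1 ≤ ε ^ 2 * x := (inv_le_iff_one_le_mul₀' (by positivity)).1 hx
    nlinarith
  exact hsqx.trans (mul_le_mul_of_nonneg_left (hanti _ hle) hK.le)

lemma exists_pos_eventually_le_mul (hG : LogDecay G) :
    ∃ c > 0, ∀ᶠ x in atTop, c ≤ x * G x := by
  obtain ⟨K, -, hsq⟩ := hG.exists_le_mul_sq
  obtain ⟨a, ha⟩ := eventually_atTop.1 (hsq.and (hG.eventually_pos.and hG.eventually_anti))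
  obtain ⟨b, hb1, hab, hKb⟩ : ∃ b : ℝ, 1 < b ∧ a ≤ b ∧ K ≤ b :=
    ((eventually_gt_atTop 1).and ((eventually_ge_atTop a).and (eventually_ge_atTop K))).exists
  have hbig : ∀ x, b ≤ x → G x ≤ K * G (x ^ 2) ∧ 0 < G x ∧ ∀ y, x ≤ y → G y ≤ G x :=
    fun x hx => ha x (hab.trans hx)
  have hbb : b ≤ b ^ 2 := le_self_pow₀ hb1.le two_ne_zero
  refine ⟨G (b ^ 2), (hbig _ hbb).2.1, ?_⟩
  filter_upwards [eventually_ge_atTop b] with x hx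
  refine sq_induction (P := fun x => G (b ^ 2) ≤ x * G x) hb1 (fun x hbx hxb => ?_)
    (fun x hbx ih => ?_) x hx
  · exact ((hbig x hbx).2.2 _ hxb).trans
      (le_mul_of_one_le_left (hbig x hbx).2.1.le (hb1.le.trans hbx))
  · have hGsq : 0 < G (x ^ 2) :=
      (hbig _ (hbx.trans (le_self_pow₀ (hb1.le.trans hbx) two_ne_zero))).2.1
    have hx0 : 0 ≤ x := by linarith
    calc G (b ^ 2) ≤ x * G x := ih
      _ ≤ x * (K * G (x ^ 2)) := by gcongr; exact (hbig x hbx).1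
      _ ≤ x * (x * G (x ^ 2)) := by gcongr; exact hKb.trans hbx
      _ = x ^ 2 * G (x ^ 2) := by ring

lemma tendsto_id_mul_atTop (hG : LogDecay G) : Tendsto (fun x => x * G x) atTop atTop := by
  obtain ⟨K, hK, hsq⟩ := hG.exists_le_mul_sq
  obtain ⟨c, hc, hmul⟩ := hG.exists_pos_eventually_le_mul
  have hsqrt : ∀ᶠ x in atTop, c / K * √x ≤ x * G x := by
    filter_upwards [Real.tendsto_sqrt_atTop.eventually (hsq.and hmul), eventually_ge_atTop 0]
      with x ⟨hGx, hcx⟩ hx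
    rw [Real.sq_sqrt hx] at hGx
    rw [div_mul_eq_mul_div, div_le_iff₀ hK]
    calc c * √x ≤ √x * G √x * √x := by gcongr
      _ ≤ √x * (K * G x) * √x := by gcongr
      _ = √x * √x * G x * K := by ring
      _ = x * G x * K := by rw [Real.mul_self_sqrt hx]
  exact tendsto_atTop_mono' _ hsqrt (Real.tendsto_sqrt_atTop.const_mul_atTop (by positivity))

end LogDecay

end LogDecay

section PhiIter

lemma phiIter_nonneg (β : ℝ) (n : ℕ) {x : ℝ} (hx : 0 ≤ x) : 0 ≤ phiIter β n x := by
  induction n with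
  | zero => exact hx
  | succ n ih => exact Real.log_nonneg (le_add_of_nonneg_right (Real.rpow_nonneg ih _))

lemma monotoneOn_phiIter {β : ℝ} (hβ : 0 ≤ β) (n : ℕ) : MonotoneOn (phiIter β n) (Ici 0) := by
  induction n with
  | zero => exact monotoneOn_id
  | succ n ih =>
    intro x hx y hy hxy
    have hφx : 0 ≤ phiIter β n x := phiIter_nonneg β n hx
    have hφxy : phiIter β n x ≤ phiIter β n y := ih hx hy hxy
    exact Real.log_le_log (by positivity) (by gcongr)

variable {β : ℝ}

lemma tendsto_phiIter_atTop (hβ : 0 < β) (n : ℕ) : Tendsto (phiIter β n) atTop atTop := by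
  induction n with
  | zero => exact tendsto_id
  | succ n ih =>
    exact Real.tendsto_log_atTop.comp
      (tendsto_atTop_add_const_left _ _ ((tendsto_rpow_atTop (half_pos hβ)).comp ih))

lemma phiIter_isTheta_iterLog (hβ : 0 < β) (n : ℕ) : phiIter β n =Θ[atTop] iterLog n := by
  induction n with
  | zero => exact isTheta_rfl
  | succ n ih =>
    have hpow : Tendsto (fun x => phiIter β n x ^ (β / 2)) atTop atTop :=
      (tendsto_rpow_atTop (half_pos hβ)).comp (tendsto_phiIter_atTop hβ n)
    have hone : (fun x => 1 + phiIter β n x ^ (β / 2)) =Θ[atTop]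
        fun x => phiIter β n x ^ (β / 2) :=
      (isLittleO_const_left.2 (Or.inr (tendsto_norm_atTop_atTop.comp hpow))).right_isTheta_add.symm
    have hlog_rpow : (fun x => Real.log (phiIter β n x ^ (β / 2))) =ᶠ[atTop]
        fun x => β / 2 * Real.log (phiIter β n x) := by
      filter_upwards [(tendsto_phiIter_atTop hβ n).eventually_gt_atTop 0] with x hx
      exact Real.log_rpow hx _
    calc phiIter β (n + 1)
        =Θ[atTop] fun x => Real.log (phiIter β n x ^ (β / 2)) :=
          (isEquivalent_log_of_isTheta hone (tendsto_atTop_add_const_left _ _ hpow) hpow).isTheta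
      _ =Θ[atTop] fun x => Real.log (phiIter β n x) :=
          hlog_rpow.trans_isTheta ((isTheta_const_mul_left (half_pos hβ).ne').2 isTheta_rfl)
      _ =Θ[atTop] iterLog (n + 1) :=
          (isEquivalent_log_of_isTheta ih (tendsto_phiIter_atTop hβ n)
            (tendsto_iterLog_atTop n)).isTheta

lemma phiIter_succ_isLittleO_id (hβ : 0 < β) (n : ℕ) : phiIter β (n + 1) =o[atTop] id :=
  ((phiIter_isTheta_iterLog hβ (n + 1)).trans_isLittleO
    (Real.isLittleO_log_id_atTop.comp_tendsto (tendsto_iterLog_atTop n))).trans_isBigO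
    (iterLog_isBigO_id n)

lemma phiIter_comp_two_mul_isTheta (hβ : 0 < β) (n : ℕ) :
    (fun x => phiIter β n (2 * x)) =Θ[atTop] phiIter β n := by
  have htwo : Tendsto (fun x : ℝ => 2 * x) atTop atTop := tendsto_id.const_mul_atTop two_pos
  have hφ := phiIter_isTheta_iterLog hβ n
  calc (fun x => phiIter β n (2 * x))
      =Θ[atTop] fun x => iterLog n (2 * x) := ⟨hφ.1.comp_tendsto htwo, hφ.2.comp_tendsto htwo⟩
    _ =Θ[atTop] iterLog n :=
        isTheta_iterLog_comp ((isTheta_const_mul_left two_ne_zero).2 isTheta_rfl) htwo tendsto_id n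
    _ =Θ[atTop] phiIter β n := hφ.symm

lemma phiIter_succ_increment_isTheta (hβ : 0 < β) (n : ℕ) :
    (fun x => phiIter β (n + 1) (2 * x) - phiIter β (n + 1) x) =Θ[atTop]
      fun x => (phiIter β n (2 * x) - phiIter β n x) / phiIter β n x := by
  refine isTheta_log_one_add_rpow_sub (half_pos hβ)
    ((tendsto_phiIter_atTop hβ n).eventually_ge_atTop 1) ?_ (phiIter_comp_two_mul_isTheta hβ n).1
  filter_upwards [eventually_ge_atTop 0] with x hx
  exact monotoneOn_phiIter hβ.le n hx (mul_nonneg two_pos.le hx) (by linarith)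

lemma phiIter_increment_isTheta (hβ : 0 < β) (n : ℕ) :
    (fun x => phiIter β (n + 1) (2 * x) - phiIter β (n + 1) x) =Θ[atTop]
      fun x => ∏ k ∈ Finset.Icc 1 n, (iterLog k x)⁻¹ := by
  induction n with
  | zero =>
    refine (phiIter_succ_increment_isTheta hβ 0).trans_eventuallyEq ?_
    filter_upwards [eventually_ne_atTop 0] with x hx
    change (2 * x - x) / x = _
    rw [Finset.Icc_eq_empty (by norm_num), Finset.prod_empty, two_mul, add_sub_cancel_right,
      div_self hx]
  | succ n ih =>
    simp only [Finset.prod_Icc_succ_top n.succ_pos, ← div_eq_mul_inv]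
    exact (phiIter_succ_increment_isTheta hβ (n + 1)).trans
      (ih.div (phiIter_isTheta_iterLog hβ (n + 1)))

/-- The slowly varying factor `(log_n x)⁻² ∏_{k=1}^{n-1} (log_k x)⁻¹` that governs the second
difference of the conjugate exponent `λ / φ_n(λ)`. -/
noncomputable def iterLogRate (n : ℕ) : ℝ → ℝ := fun x =>
  (iterLog n x)⁻¹ ^ 2 * ∏ k ∈ Finset.Icc 1 (n - 1), (iterLog k x)⁻¹

lemma logDecay_iterLogRate {n : ℕ} (hn : n ≠ 0) : LogDecay (iterLogRate n) := by
  unfold iterLogRate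
  simp only [sq]
  exact ((LogDecay.inv_iterLog hn).mul (.inv_iterLog hn)).mul (LogDecay.finsetProd fun k hk =>
    .inv_iterLog (Nat.one_le_iff_ne_zero.1 (Finset.mem_Icc.1 hk).1))

lemma conjugate_second_difference_isTheta (hβ : 0 < β) (n : ℕ) :
    (fun x => 2 * (x / phiIter β (n + 1) x) - 2 * x / phiIter β (n + 1) (2 * x)) =Θ[atTop]
      fun x => x * iterLogRate (n + 1) x := by
  set φ := phiIter β (n + 1)
  have hφ : Tendsto φ atTop atTop := tendsto_phiIter_atTop hβ (n + 1)
  have hφlog : φ =Θ[atTop] iterLog (n + 1) := phiIter_isTheta_iterLog hβ (n + 1)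
  have hφtwo : (fun x => φ (2 * x)) =Θ[atTop] φ := phiIter_comp_two_mul_isTheta hβ (n + 1)
  have hdiff : (fun x => 2 * (x / φ x) - 2 * x / φ (2 * x)) =ᶠ[atTop]
      fun x => 2 * (x * ((φ x)⁻¹ * (φ (2 * x))⁻¹ * (φ (2 * x) - φ x))) := by
    filter_upwards [hφ.eventually_ne_atTop 0,
      (hφ.comp (tendsto_id.const_mul_atTop two_pos)).eventually_ne_atTop 0] with x hx hx2
    simp only [Function.comp_apply, id_eq] at hx2
    field_simp
  refine hdiff.trans_isTheta ((isTheta_const_mul_left two_ne_zero).2 (isTheta_rfl.mul ?_))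
  unfold iterLogRate
  simp only [sq]
  exact (hφlog.inv.mul (hφtwo.trans hφlog).inv).mul (phiIter_increment_isTheta hβ n)

end PhiIter

section LevyDensity

variable {ν : ℝ → ℝ}

/-- A decreasing density on `(0, ∞)` whose Laplace exponent `∫ (1 - e^{-lt}) ν(t) dt` is finite,
that is, a decreasing Lévy density of a subordinator. -/
structure IsDecreasingLevyDensity (ν : ℝ → ℝ) : Prop where
  nonneg : ∀ t, 0 < t → 0 ≤ ν t
  antitoneOn : AntitoneOn ν (Ioi 0)
  integrableOn : ∀ l, 0 < l → IntegrableOn (fun t => (1 - Real.exp (-(l * t))) * ν t) (Ioi 0)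

/-- The integral `∫ (1 - e^{-lt})² ν(t) dt`, which is the second difference `2ψ(l) - ψ(2l)` of a
Laplace exponent `ψ` with `ψ(0) = 0` and Lévy density `ν`. -/
noncomputable def levySecondDifference (ν : ℝ → ℝ) (l : ℝ) : ℝ :=
  ∫ t in Ioi (0 : ℝ), (1 - Real.exp (-(l * t))) ^ 2 * ν t

lemma one_sub_exp_neg_nonneg {x : ℝ} (hx : 0 ≤ x) : 0 ≤ 1 - Real.exp (-x) :=
  sub_nonneg.2 (Real.exp_le_one_iff.2 (neg_nonpos.2 hx))

lemma one_sub_exp_neg_sq_le_one {x : ℝ} (hx : 0 ≤ x) : (1 - Real.exp (-x)) ^ 2 ≤ 1 :=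
  pow_le_one₀ (one_sub_exp_neg_nonneg hx) (by linarith [Real.exp_pos (-x)])

lemma one_sub_exp_neg_sq_le_sq {x : ℝ} (hx : 0 ≤ x) : (1 - Real.exp (-x)) ^ 2 ≤ x ^ 2 :=
  pow_le_pow_left₀ (one_sub_exp_neg_nonneg hx) (by linarith [Real.add_one_le_exp (-x)]) 2

lemma one_le_nine_mul_one_sub_exp_neg_sq {x : ℝ} (hx : 1 / 2 ≤ x) :
    1 ≤ 9 * (1 - Real.exp (-x)) ^ 2 := by
  have hexp : Real.exp (-x) ≤ 2 / 3 := by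
    rw [Real.exp_neg, inv_le_comm₀ (Real.exp_pos x) (by norm_num)]
    linarith [Real.add_one_le_exp x]
  nlinarith

lemma one_le_nine_mul_one_sub_exp_neg_sq_of_lt {b t : ℝ} (hb : 0 < b) (hbt : b < t) :
    1 ≤ 9 * (1 - Real.exp (-((2 * b)⁻¹ * t))) ^ 2 := by
  refine one_le_nine_mul_one_sub_exp_neg_sq ?_
  rw [inv_mul_eq_div, div_le_div_iff₀ two_pos (by positivity)]
  linarith 

lemma integrableOn_one_sub_exp_mul_of_le (hν : AEStronglyMeasurable ν (volume.restrict (Ioi 0)))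
    {l m : ℝ} (hl : 0 ≤ l) (hlm : l ≤ m)
    (hm : IntegrableOn (fun t => (1 - Real.exp (-(m * t))) * ν t) (Ioi 0)) :
    IntegrableOn (fun t => (1 - Real.exp (-(l * t))) * ν t) (Ioi 0) := by
  refine Integrable.mono hm (.mul (by fun_prop) hν) ?_
  filter_upwards [ae_restrict_mem measurableSet_Ioi] with t ht
  have ht0 : 0 ≤ t := le_of_lt ht
  rw [norm_mul, norm_mul, Real.norm_of_nonneg (one_sub_exp_neg_nonneg (by positivity)),
    Real.norm_of_nonneg (one_sub_exp_neg_nonneg (mul_nonneg (hl.trans hlm) ht0))]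
  gcongr

namespace IsDecreasingLevyDensity

lemma integrableOn_sq (hν : IsDecreasingLevyDensity ν) {l : ℝ} (hl : 0 < l) :
    IntegrableOn (fun t => (1 - Real.exp (-(l * t))) ^ 2 * ν t) (Ioi 0) := by
  refine (hν.integrableOn l hl).bdd_mul (c := 1)
    (by fun_prop : Continuous fun t => 1 - Real.exp (-(l * t))).aestronglyMeasurable ?_
    |>.congr ?_
  · filter_upwards [ae_restrict_mem measurableSet_Ioi] with t ht
    have hnonneg : 0 ≤ 1 - Real.exp (-(l * t)) := one_sub_exp_neg_nonneg (mul_pos hl ht).le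
    rw [Real.norm_of_nonneg hnonneg]
    linarith [Real.exp_pos (-(l * t))]
  · exact Eventually.of_forall fun t => by ring

lemma levySecondDifference_eq (hν : IsDecreasingLevyDensity ν) {l : ℝ} (hl : 0 < l) :
    levySecondDifference ν l = 2 * (∫ t in Ioi (0 : ℝ), (1 - Real.exp (-(l * t))) * ν t) -
      ∫ t in Ioi (0 : ℝ), (1 - Real.exp (-(2 * l * t))) * ν t := by
  rw [← integral_const_mul, ← integral_sub ((hν.integrableOn l hl).const_mul 2)
    (hν.integrableOn (2 * l) (by positivity))]
  refine integral_congr_ae (Eventually.of_forall fun t => ?_)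
  have hexp : Real.exp (-(2 * l * t)) = Real.exp (-(l * t)) ^ 2 := by
    rw [← Real.exp_nat_mul]
    congr 1
    push_cast
    ring
  simp only [hexp]
  ring

lemma integrableOn_Ioi (hν : IsDecreasingLevyDensity ν) {b : ℝ} (hb : 0 < b) :
    IntegrableOn ν (Ioi b) := by
  have hsub : Ioi b ⊆ Ioi 0 := Ioi_subset_Ioi hb.le
  refine (((hν.integrableOn_sq (l := (2 * b)⁻¹) (by positivity)).mono_set hsub).const_mul 9).mono
    (aemeasurable_restrict_of_antitoneOn measurableSet_Ioi
      (hν.antitoneOn.mono hsub)).aestronglyMeasurable ?_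
  filter_upwards [ae_restrict_mem measurableSet_Ioi] with t ht
  rw [← mul_assoc, norm_mul]
  exact le_mul_of_one_le_left (norm_nonneg _)
    ((one_le_nine_mul_one_sub_exp_neg_sq_of_lt hb ht).trans (le_abs_self _))

lemma levySecondDifference_nonneg (hν : IsDecreasingLevyDensity ν) (l : ℝ) :
    0 ≤ levySecondDifference ν l :=
  setIntegral_nonneg measurableSet_Ioi fun t ht => mul_nonneg (sq_nonneg _) (hν.nonneg t ht)

lemma setIntegral_Ioi_le (hν : IsDecreasingLevyDensity ν) {b : ℝ} (hb : 0 < b) :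
    ∫ t in Ioi b, ν t ≤ 9 * levySecondDifference ν (2 * b)⁻¹ := by
  have hint := (hν.integrableOn_sq (l := (2 * b)⁻¹) (by positivity)).const_mul 9
  rw [levySecondDifference, ← integral_const_mul]
  calc ∫ t in Ioi b, ν t
      ≤ ∫ t in Ioi b, 9 * ((1 - Real.exp (-((2 * b)⁻¹ * t))) ^ 2 * ν t) := by
        refine setIntegral_mono_on (hν.integrableOn_Ioi hb)
          (IntegrableOn.mono_set hint (Ioi_subset_Ioi hb.le)) measurableSet_Ioi fun t ht => ?_
        rw [← mul_assoc]
        exact le_mul_of_one_le_left (hν.nonneg t (hb.trans ht))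
          (one_le_nine_mul_one_sub_exp_neg_sq_of_lt hb ht)
    _ ≤ ∫ t in Ioi 0, 9 * ((1 - Real.exp (-((2 * b)⁻¹ * t))) ^ 2 * ν t) := by
        refine setIntegral_mono_set hint ?_ (Ioi_subset_Ioi hb.le).eventuallyLE
        filter_upwards [ae_restrict_mem measurableSet_Ioi] with t ht
        have hνt := hν.nonneg t ht
        simp only [Pi.zero_apply]
        positivity

lemma const_le_setIntegral_Ioc (hν : IsDecreasingLevyDensity ν) {a b : ℝ} (ha : 0 < a)
    (hab : a ≤ b) : (b - a) * ν b ≤ ∫ t in Ioc a b, ν t := by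
  have hconst : ∫ _ in Ioc a b, ν b = (b - a) * ν b := by
    rw [setIntegral_const, Real.volume_real_Ioc_of_le hab, smul_eq_mul]
  rw [← hconst]
  exact setIntegral_mono_on (integrableOn_const (by simp))
    ((hν.integrableOn_Ioi ha).mono_set Ioc_subset_Ioi_self) measurableSet_Ioc
    fun t ht => hν.antitoneOn (ha.trans ht.1) (ha.trans_le hab) ht.2

lemma mul_le_levySecondDifference_inv (hν : IsDecreasingLevyDensity ν) {t : ℝ} (ht : 0 < t) :
    t * ν t ≤ 18 * levySecondDifference ν t⁻¹ := by
  have hint := hν.integrableOn_Ioi (half_pos ht)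
  have hhalf : t / 2 * ν t ≤ 9 * levySecondDifference ν t⁻¹ := by
    calc t / 2 * ν t = (t - t / 2) * ν t := by ring
      _ ≤ ∫ s in Ioc (t / 2) t, ν s :=
        hν.const_le_setIntegral_Ioc (half_pos ht) (half_le_self ht.le)
      _ ≤ ∫ s in Ioi (t / 2), ν s := by
        refine setIntegral_mono_set hint ?_ Ioc_subset_Ioi_self.eventuallyLE
        filter_upwards [ae_restrict_mem measurableSet_Ioi] with s hs
        exact hν.nonneg s ((half_pos ht).trans hs)
      _ ≤ 9 * levySecondDifference ν (2 * (t / 2))⁻¹ := hν.setIntegral_Ioi_le (half_pos ht)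
      _ = 9 * levySecondDifference ν t⁻¹ := by rw [mul_div_cancel₀ t two_ne_zero]
  linarith

lemma setIntegral_Ioc_le_const (hν : IsDecreasingLevyDensity ν) {a b : ℝ} (ha : 0 < a)
    (hab : a ≤ b) : ∫ t in Ioc a b, ν t ≤ (b - a) * ν a := by
  have hconst : ∫ _ in Ioc a b, ν a = (b - a) * ν a := by
    rw [setIntegral_const, Real.volume_real_Ioc_of_le hab, smul_eq_mul]
  rw [← hconst]
  exact setIntegral_mono_on ((hν.integrableOn_Ioi ha).mono_set Ioc_subset_Ioi_self)
    (integrableOn_const (by simp)) measurableSet_Ioc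
    fun t ht => hν.antitoneOn ha (ha.trans ht.1) ht.1.le

lemma setIntegral_Ioc_zero_sq_mul_le (hν : IsDecreasingLevyDensity ν) {a l M : ℝ} (ha : 0 < a)
    (hl : 0 < l) (hM : ∀ t, 0 < t → t ≤ a → ν t ≤ M / t ^ 2) :
    ∫ t in Ioc 0 a, (1 - Real.exp (-(l * t))) ^ 2 * ν t ≤ l ^ 2 * M * a := by
  calc ∫ t in Ioc 0 a, (1 - Real.exp (-(l * t))) ^ 2 * ν t
      ≤ ∫ _ in Ioc 0 a, l ^ 2 * M := by
        refine setIntegral_mono_on ((hν.integrableOn_sq hl).mono_set Ioc_subset_Ioi_self)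
          (integrableOn_const (by simp)) measurableSet_Ioc fun t ⟨ht, hta⟩ => ?_
        calc (1 - Real.exp (-(l * t))) ^ 2 * ν t ≤ (l * t) ^ 2 * (M / t ^ 2) :=
              mul_le_mul (one_sub_exp_neg_sq_le_sq (by positivity)) (hM t ht hta)
                (hν.nonneg t ht) (sq_nonneg _)
          _ = l ^ 2 * M := by field_simp
    _ = l ^ 2 * M * a := by
        rw [setIntegral_const, Real.volume_real_Ioc_of_le ha.le, smul_eq_mul, sub_zero, mul_comm]

lemma setIntegral_sq_mul_le (hν : IsDecreasingLevyDensity ν) {a l : ℝ} {s : Set ℝ} (ha : 0 < a)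
    (hl : 0 < l) (hs : MeasurableSet s) (hsa : s ⊆ Ioi a) :
    ∫ t in s, (1 - Real.exp (-(l * t))) ^ 2 * ν t ≤ ∫ t in s, ν t := by
  refine setIntegral_mono_on
    ((hν.integrableOn_sq hl).mono_set (hsa.trans (Ioi_subset_Ioi ha.le)))
    ((hν.integrableOn_Ioi ha).mono_set hsa) hs fun t ht => ?_
  have ht0 : 0 < t := ha.trans (hsa ht)
  exact mul_le_of_le_one_left (hν.nonneg t ht0) (one_sub_exp_neg_sq_le_one (by positivity))

lemma levySecondDifference_le_add (hν : IsDecreasingLevyDensity ν) {a b l M : ℝ} (ha : 0 < a)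
    (hab : a ≤ b) (hl : 0 < l) (hM : ∀ t, 0 < t → t ≤ a → ν t ≤ M / t ^ 2) :
    levySecondDifference ν l ≤
      l ^ 2 * M * a + b * ν a + 9 * levySecondDifference ν (2 * b)⁻¹ := by
  have hb : 0 < b := ha.trans_le hab
  have hint := hν.integrableOn_sq hl
  have hint_a : IntegrableOn _ (Ioi a) := hint.mono_set (Ioi_subset_Ioi ha.le)
  have hsplit : levySecondDifference ν l =
      (∫ t in Ioc 0 a, (1 - Real.exp (-(l * t))) ^ 2 * ν t) +
      ((∫ t in Ioc a b, (1 - Real.exp (-(l * t))) ^ 2 * ν t) +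
        ∫ t in Ioi b, (1 - Real.exp (-(l * t))) ^ 2 * ν t) := by
    rw [levySecondDifference, ← Ioc_union_Ioi_eq_Ioi ha.le,
      setIntegral_union (Ioc_disjoint_Ioi le_rfl) measurableSet_Ioi
        (hint.mono_set Ioc_subset_Ioi_self) hint_a, ← Ioc_union_Ioi_eq_Ioi hab,
      setIntegral_union (Ioc_disjoint_Ioi le_rfl) measurableSet_Ioi
        (hint_a.mono_set Ioc_subset_Ioi_self) (hint_a.mono_set (Ioi_subset_Ioi hab))]
  have hsmall := hν.setIntegral_Ioc_zero_sq_mul_le ha hl hM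
  have hmiddle : ∫ t in Ioc a b, (1 - Real.exp (-(l * t))) ^ 2 * ν t ≤ b * ν a :=
    calc ∫ t in Ioc a b, (1 - Real.exp (-(l * t))) ^ 2 * ν t
        ≤ ∫ t in Ioc a b, ν t :=
          hν.setIntegral_sq_mul_le ha hl measurableSet_Ioc Ioc_subset_Ioi_self
      _ ≤ (b - a) * ν a := hν.setIntegral_Ioc_le_const ha hab
      _ ≤ b * ν a := mul_le_mul_of_nonneg_right (sub_le_self b ha.le) (hν.nonneg a ha)
  have hlarge : ∫ t in Ioi b, (1 - Real.exp (-(l * t))) ^ 2 * ν t ≤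
      9 * levySecondDifference ν (2 * b)⁻¹ :=
    (hν.setIntegral_sq_mul_le hb hl measurableSet_Ioi subset_rfl).trans (hν.setIntegral_Ioi_le hb)
  linarith

lemma isBigO_of_levySecondDifference_isBigO (hν : IsDecreasingLevyDensity ν) {G : ℝ → ℝ}
    (hS : levySecondDifference ν =O[atTop] fun l => l * G l) :
    ν =O[𝓝[>] 0] fun t => G t⁻¹ / t ^ 2 := by
  have hν_le : ν =O[𝓝[>] 0] fun t => t⁻¹ * levySecondDifference ν t⁻¹ := by
    refine IsBigO.of_bound 18 ?_
    filter_upwards [self_mem_nhdsWithin] with t ht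
    rw [Real.norm_of_nonneg (hν.nonneg t ht), Real.norm_of_nonneg
      (mul_nonneg (inv_pos.2 ht).le (hν.levySecondDifference_nonneg _)), mul_left_comm,
      le_inv_mul_iff₀ ht]
    exact hν.mul_le_levySecondDifference_inv ht
  refine hν_le.trans
    (((isBigO_refl _ _).mul (hS.comp_tendsto tendsto_inv_nhdsGT_zero)).trans_eventuallyEq ?_)
  exact Eventually.of_forall fun t => by simp only [Function.comp_apply]; ring

lemma exists_eventually_forall_le_div_sq (hν : IsDecreasingLevyDensity ν) {G : ℝ → ℝ}
    (hG : LogDecay G) (hS : levySecondDifference ν =O[atTop] fun l => l * G l) :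
    ∃ A > 0, ∀ᶠ l in atTop, ∀ t, 0 < t → t ≤ l⁻¹ → ν t ≤ A * G l / t ^ 2 := by
  obtain ⟨A, hA, hνA⟩ := (hν.isBigO_of_levySecondDifference_isBigO hS).exists_pos
  refine ⟨A, hA, ?_⟩
  filter_upwards [eventually_gt_atTop 0, hG.eventually_anti,
    eventually_forall_ge_atTop.2 (tendsto_inv_atTop_nhdsGT_zero.eventually hνA.bound),
    eventually_forall_ge_atTop.2 hG.eventually_pos] with l hl hanti hνl hGpos t ht htl
  have hlt : l ≤ t⁻¹ := (le_inv_comm₀ hl ht).2 htl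
  have hνt := hνl _ hlt
  rw [inv_inv, Real.norm_of_nonneg (div_nonneg (hGpos _ hlt).le (sq_nonneg t)),
    ← mul_div_assoc] at hνt
  refine (le_abs_self _).trans (hνt.trans ?_)
  gcongr
  exact hanti _ hlt

lemma exists_eventually_levySecondDifference_le (hν : IsDecreasingLevyDensity ν) {G : ℝ → ℝ}
    (hG : LogDecay G) (hS : levySecondDifference ν =O[atTop] fun l => l * G l) :
    ∃ C > 0, ∀ ε, 0 < ε → ε ≤ 1 / 2 → ∀ᶠ l in atTop,
      levySecondDifference ν l ≤ C * ε * (l * G l) + ν (ε / l) / (2 * (ε * l)) := by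
  obtain ⟨A, hA, hνA⟩ := hν.exists_eventually_forall_le_div_sq hG hS
  obtain ⟨B, hB, hSB⟩ := hS.exists_pos
  obtain ⟨K, hK, hGK⟩ := hG.exists_forall_eventually_comp_mul_le
  refine ⟨A + 9 * B * K, by positivity, fun ε hε hε2 => ?_⟩
  have hscale : Tendsto (fun l => ε * l) atTop atTop := tendsto_id.const_mul_atTop hε
  filter_upwards [hνA, hGK ε hε, eventually_gt_atTop 0, hscale.eventually hSB.bound,
    hscale.eventually hG.eventually_pos] with l hνl hGε hl hSε hGεpos
  have hM : ∀ t, 0 < t → t ≤ ε / l → ν t ≤ A * G l / t ^ 2 := fun t ht htl =>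
    hνl t ht (htl.trans ((div_le_div_of_nonneg_right (by linarith) hl.le).trans_eq
      (one_div l)))
  have htail : levySecondDifference ν (ε * l) ≤ B * K * ε * (l * G l) := by
    rw [Real.norm_of_nonneg (hν.levySecondDifference_nonneg _),
      Real.norm_of_nonneg (by positivity)] at hSε
    calc levySecondDifference ν (ε * l) ≤ B * (ε * l * G (ε * l)) := hSε
      _ ≤ B * (ε * l * (K * G l)) := by gcongr
      _ = B * K * ε * (l * G l) := by ring
  have hle : ε / l ≤ 1 / (2 * (ε * l)) := by
    rw [div_le_div_iff₀ hl (by positivity)]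
    nlinarith [mul_le_mul hε2 hε2 hε.le (by norm_num)]
  calc levySecondDifference ν l
      ≤ l ^ 2 * (A * G l) * (ε / l) + 1 / (2 * (ε * l)) * ν (ε / l) +
          9 * levySecondDifference ν (2 * (1 / (2 * (ε * l))))⁻¹ :=
        hν.levySecondDifference_le_add (by positivity) hle hl hM
    _ = A * ε * (l * G l) + ν (ε / l) / (2 * (ε * l)) + 9 * levySecondDifference ν (ε * l) := by
        field_simp
    _ ≤ (A + 9 * B * K) * ε * (l * G l) + ν (ε / l) / (2 * (ε * l)) := by linarith

lemma exists_eventually_mul_sq_mul_le_comp_div (hν : IsDecreasingLevyDensity ν) {G : ℝ → ℝ}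
    (hG : LogDecay G) (hS : levySecondDifference ν =Θ[atTop] fun l => l * G l) :
    ∃ ε D : ℝ, 0 < ε ∧ ε ≤ 1 ∧ ∀ᶠ l in atTop, ε * l ^ 2 * G l ≤ D * ν (ε / l) := by
  obtain ⟨C, hC, hSC⟩ := hν.exists_eventually_levySecondDifference_le hG hS.1
  obtain ⟨D, hD, hSD⟩ := hS.2.exists_pos
  obtain ⟨ε, hε, hε2, hεCD⟩ : ∃ ε : ℝ, 0 < ε ∧ ε ≤ 1 / 2 ∧ D * (C * ε) ≤ 1 / 2 := by
    refine ⟨min (1 / 2) (1 / (2 * (D * C))), by positivity, min_le_left _ _, ?_⟩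
    rw [← mul_assoc, ← le_div_iff₀' (by positivity), div_div]
    exact min_le_right _ _
  refine ⟨ε, D, hε, by linarith, ?_⟩
  filter_upwards [hSC ε hε hε2, hSD.bound, hG.eventually_pos, eventually_gt_atTop 0]
    with l hSl hGl hGpos hl
  rw [Real.norm_of_nonneg (by positivity),
    Real.norm_of_nonneg (hν.levySecondDifference_nonneg l)] at hGl
  have hhalf : l * G l ≤ 1 / 2 * (l * G l) + D * ν (ε / l) / (2 * (ε * l)) :=
    calc l * G l ≤ D * (C * ε * (l * G l) + ν (ε / l) / (2 * (ε * l))) :=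
          hGl.trans (mul_le_mul_of_nonneg_left hSl hD.le)
      _ = D * (C * ε) * (l * G l) + D * ν (ε / l) / (2 * (ε * l)) := by ring
      _ ≤ 1 / 2 * (l * G l) + D * ν (ε / l) / (2 * (ε * l)) := by gcongr
  have hmul : l * G l / 2 ≤ D * ν (ε / l) / (2 * (ε * l)) := by linarith
  rw [le_div_iff₀ (by positivity)] at hmul
  linarith

theorem isTheta_of_levySecondDifference_isTheta (hν : IsDecreasingLevyDensity ν) {G : ℝ → ℝ}
    (hG : LogDecay G) (hS : levySecondDifference ν =Θ[atTop] fun l => l * G l) :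
    ν =Θ[𝓝[>] 0] fun t => G t⁻¹ / t ^ 2 := by
  refine ⟨hν.isBigO_of_levySecondDifference_isBigO hS.1, ?_⟩
  obtain ⟨ε, D, hε, hε1, hlower⟩ := hν.exists_eventually_mul_sq_mul_le_comp_div hG hS
  refine IsBigO.of_bound (D / ε ^ 3) ?_
  filter_upwards [self_mem_nhdsWithin,
    (tendsto_inv_nhdsGT_zero.const_mul_atTop hε).eventually (hlower.and hG.eventually_anti),
    tendsto_inv_nhdsGT_zero.eventually hG.eventually_pos] with t ht ⟨hνt, hanti⟩ hGpos
  have ht0 : 0 < t := ht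
  have hGt : G t⁻¹ ≤ G (ε * t⁻¹) := hanti _ (mul_le_of_le_one_left (by positivity) hε1)
  rw [show ε / (ε * t⁻¹) = t by field_simp] at hνt
  rw [Real.norm_of_nonneg (by positivity), Real.norm_of_nonneg (hν.nonneg t ht),
    div_mul_eq_mul_div, le_div_iff₀ (by positivity)]
  calc G t⁻¹ / t ^ 2 * ε ^ 3 = ε * (ε * t⁻¹) ^ 2 * G t⁻¹ := by field_simp
    _ ≤ ε * (ε * t⁻¹) ^ 2 * G (ε * t⁻¹) := by gcongr
    _ ≤ D * ν t := hνt

end IsDecreasingLevyDensity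

end LevyDensity

section Subordination

/-- The factor `(4πt)^{-q} e^{-R/(4t)}`, which for `q = d / 2` and `R = |x|²` is the transition
density of Brownian motion in dimension `d` (run at twice the usual speed). -/
noncomputable def heatKernel (q R t : ℝ) : ℝ :=
  (4 * Real.pi * t) ^ (-q) * Real.exp (-(R / (4 * t)))

/-- The Lévy density of the subordinate Brownian motion whose subordinator has Lévy density `ν`,
in the variables of `heatKernel`. -/
noncomputable def subordinateLevyDensity (ν : ℝ → ℝ) (q R : ℝ) : ℝ :=
  ∫ t in Ioi (0 : ℝ), heatKernel q R t * ν t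

variable {ν : ℝ → ℝ} {q R t : ℝ}

lemma rpow_mul_exp_neg_le {p x : ℝ} (hp : 0 < p) (hx : 0 ≤ x) :
    x ^ p * Real.exp (-x) ≤ p ^ p := by
  have hdiv : x / p ≤ Real.exp (x / p) := by linarith [Real.add_one_le_exp (x / p)]
  have hpow : x ^ p / p ^ p ≤ Real.exp x := by
    calc x ^ p / p ^ p = (x / p) ^ p := (Real.div_rpow hx hp.le p).symm
      _ ≤ Real.exp (x / p) ^ p := by gcongr
      _ = Real.exp x := by rw [← Real.exp_mul, div_mul_cancel₀ x hp.ne']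
  rw [div_le_iff₀ (by positivity)] at hpow
  rwa [Real.exp_neg, ← div_eq_mul_inv, div_le_iff₀' (Real.exp_pos x)]

lemma heatKernel_nonneg (q R : ℝ) (ht : 0 ≤ t) : 0 ≤ heatKernel q R t := by
  unfold heatKernel
  positivity

lemma measurable_heatKernel (q R : ℝ) : Measurable (heatKernel q R) := by
  unfold heatKernel
  fun_prop

lemma four_pi_mul_rpow_neg_le (hq : 0 ≤ q) (ht : 0 < t) : (4 * Real.pi * t) ^ (-q) ≤ t ^ (-q) :=
  Real.rpow_le_rpow_of_nonpos ht (le_mul_of_one_le_left ht.le (by linarith [Real.pi_gt_three]))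
    (neg_nonpos.2 hq)

lemma heatKernel_le_mul_sq (hq : 0 ≤ q) (hR : 0 < R) (ht : 0 < t) :
    heatKernel q R t ≤ (4 * (q + 2)) ^ (q + 2) * R ^ (-(q + 2)) * t ^ 2 := by
  have hexp : Real.exp (-(R / (4 * t))) ≤ (q + 2) ^ (q + 2) * (R / (4 * t)) ^ (-(q + 2)) := by
    rw [Real.rpow_neg (by positivity), ← div_eq_mul_inv, le_div_iff₀' (by positivity)]
    exact rpow_mul_exp_neg_le (by linarith) (by positivity)
  calc heatKernel q R t
      ≤ t ^ (-q) * ((q + 2) ^ (q + 2) * (R / (4 * t)) ^ (-(q + 2))) :=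
        mul_le_mul (four_pi_mul_rpow_neg_le hq ht) hexp (Real.exp_pos _).le (by positivity)
    _ = (4 * (q + 2)) ^ (q + 2) * R ^ (-(q + 2)) * (t ^ (-q) * t ^ (q + 2)) := by
        rw [Real.div_rpow hR.le (by positivity), Real.rpow_neg (by positivity : 0 ≤ 4 * t),
          Real.mul_rpow (by norm_num) ht.le, Real.mul_rpow (by norm_num) (by linarith)]
        field_simp
    _ = (4 * (q + 2)) ^ (q + 2) * R ^ (-(q + 2)) * t ^ 2 := by
        rw [← Real.rpow_add ht, neg_add_cancel_left, Real.rpow_two]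

lemma heatKernel_le_rpow_neg {b : ℝ} (hq : 0 ≤ q) (hR : 0 ≤ R) (hb : 0 < b) (hbt : b ≤ t) :
    heatKernel q R t ≤ b ^ (-q) := by
  have ht : 0 < t := hb.trans_le hbt
  calc heatKernel q R t ≤ (4 * Real.pi * t) ^ (-q) :=
        mul_le_of_le_one_right (by positivity)
          (Real.exp_le_one_iff.2 (neg_nonpos.2 (by positivity)))
    _ ≤ t ^ (-q) := four_pi_mul_rpow_neg_le hq ht
    _ ≤ b ^ (-q) := Real.rpow_le_rpow_of_nonpos hb hbt (neg_nonpos.2 hq)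

lemma le_heatKernel (hq : 0 ≤ q) (hR : 0 < R) (hRt : R / 2 ≤ t) (htR : t ≤ R) :
    (4 * Real.pi * R) ^ (-q) * Real.exp (-(1 / 2)) ≤ heatKernel q R t := by
  have ht : 0 < t := (half_pos hR).trans_le hRt
  refine mul_le_mul (Real.rpow_le_rpow_of_nonpos (by positivity) (by gcongr) (neg_nonpos.2 hq))
    (Real.exp_le_exp.2 (neg_le_neg ?_)) (Real.exp_pos _).le (by positivity)
  rw [div_le_div_iff₀ (by positivity) two_pos]
  linarith

namespace IsDecreasingLevyDensity

lemma aestronglyMeasurable_heatKernel_mul (hν : IsDecreasingLevyDensity ν) (q R : ℝ) :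
    AEStronglyMeasurable (fun t => heatKernel q R t * ν t) (volume.restrict (Ioi 0)) :=
  (measurable_heatKernel q R).aestronglyMeasurable.mul
    (aemeasurable_restrict_of_antitoneOn measurableSet_Ioi hν.antitoneOn).aestronglyMeasurable

lemma heatKernel_mul_le_of_le_div_sq {M : ℝ} (hν : IsDecreasingLevyDensity ν) (hq : 0 ≤ q)
    (hR : 0 < R) (ht : 0 < t) (hM : ν t ≤ M / t ^ 2) :
    heatKernel q R t * ν t ≤ (4 * (q + 2)) ^ (q + 2) * R ^ (-(q + 2)) * M := by
  calc heatKernel q R t * ν t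
      ≤ (4 * (q + 2)) ^ (q + 2) * R ^ (-(q + 2)) * t ^ 2 * (M / t ^ 2) :=
        mul_le_mul (heatKernel_le_mul_sq hq hR ht) hM (hν.nonneg t ht) (by positivity)
    _ = (4 * (q + 2)) ^ (q + 2) * R ^ (-(q + 2)) * M := by field_simp

variable {b M : ℝ}

lemma integrableOn_Ioc_heatKernel_mul (hν : IsDecreasingLevyDensity ν) (hq : 0 ≤ q) (hR : 0 < R)
    (hM : ∀ t, 0 < t → t ≤ b → ν t ≤ M / t ^ 2) :
    IntegrableOn (fun t => heatKernel q R t * ν t) (Ioc 0 b) := by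
  refine Integrable.mono' (integrable_const ((4 * (q + 2)) ^ (q + 2) * R ^ (-(q + 2)) * M))
    ((hν.aestronglyMeasurable_heatKernel_mul q R).mono_set Ioc_subset_Ioi_self) ?_
  filter_upwards [ae_restrict_mem measurableSet_Ioc] with t ⟨ht, htb⟩
  rw [Real.norm_of_nonneg (mul_nonneg (heatKernel_nonneg q R ht.le) (hν.nonneg t ht))]
  exact hν.heatKernel_mul_le_of_le_div_sq hq hR ht (hM t ht htb)

lemma integrableOn_Ioi_heatKernel_mul (hν : IsDecreasingLevyDensity ν) (hq : 0 ≤ q) (hR : 0 ≤ R)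
    (hb : 0 < b) : IntegrableOn (fun t => heatKernel q R t * ν t) (Ioi b) := by
  refine Integrable.mono' ((hν.integrableOn_Ioi hb).const_mul (b ^ (-q)))
    ((hν.aestronglyMeasurable_heatKernel_mul q R).mono_set (Ioi_subset_Ioi hb.le)) ?_
  filter_upwards [ae_restrict_mem measurableSet_Ioi] with t ht
  have ht0 : 0 < t := hb.trans ht
  rw [Real.norm_of_nonneg (mul_nonneg (heatKernel_nonneg q R ht0.le) (hν.nonneg t ht0))]
  exact mul_le_mul_of_nonneg_right (heatKernel_le_rpow_neg hq hR hb (le_of_lt ht))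
    (hν.nonneg t ht0)

lemma subordinateLevyDensity_le_add (hν : IsDecreasingLevyDensity ν) (hq : 0 ≤ q) (hR : 0 < R)
    (hb : 0 < b) (hM : ∀ t, 0 < t → t ≤ b → ν t ≤ M / t ^ 2) :
    subordinateLevyDensity ν q R ≤
      (4 * (q + 2)) ^ (q + 2) * R ^ (-(q + 2)) * M * b + b ^ (-q) * ∫ t in Ioi b, ν t := by
  have hint_zero := hν.integrableOn_Ioc_heatKernel_mul hq hR hM
  have hint_tail := hν.integrableOn_Ioi_heatKernel_mul hq hR.le hb
  rw [subordinateLevyDensity, ← Ioc_union_Ioi_eq_Ioi hb.le,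
    setIntegral_union (Ioc_disjoint_Ioi le_rfl) measurableSet_Ioi hint_zero hint_tail]
  refine add_le_add ?_ ?_
  · calc ∫ t in Ioc 0 b, heatKernel q R t * ν t
        ≤ ∫ _ in Ioc 0 b, (4 * (q + 2)) ^ (q + 2) * R ^ (-(q + 2)) * M :=
          setIntegral_mono_on hint_zero (integrableOn_const (by simp)) measurableSet_Ioc
            fun t ⟨ht, htb⟩ => hν.heatKernel_mul_le_of_le_div_sq hq hR ht (hM t ht htb)
      _ = (4 * (q + 2)) ^ (q + 2) * R ^ (-(q + 2)) * M * b := by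
          rw [setIntegral_const, Real.volume_real_Ioc_of_le hb.le, smul_eq_mul, sub_zero, mul_comm]
  · rw [← integral_const_mul]
    exact setIntegral_mono_on hint_tail ((hν.integrableOn_Ioi hb).const_mul _) measurableSet_Ioi
      fun t ht => mul_le_mul_of_nonneg_right (heatKernel_le_rpow_neg hq hR.le hb (le_of_lt ht))
        (hν.nonneg t (hb.trans ht))

lemma le_subordinateLevyDensity (hν : IsDecreasingLevyDensity ν) (hq : 0 ≤ q) (hR : 0 < R)
    (hb : 0 < b) (hM : ∀ t, 0 < t → t ≤ b → ν t ≤ M / t ^ 2) :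
    (4 * Real.pi * R) ^ (-q) * Real.exp (-(1 / 2)) * (R / 2 * ν R) ≤
      subordinateLevyDensity ν q R := by
  have hR2 : 0 < R / 2 := half_pos hR
  have hint : IntegrableOn (fun t => heatKernel q R t * ν t) (Ioi 0) := by
    rw [← Ioc_union_Ioi_eq_Ioi hb.le]
    exact (hν.integrableOn_Ioc_heatKernel_mul hq hR hM).union
      (hν.integrableOn_Ioi_heatKernel_mul hq hR.le hb)
  have hsub : Ioc (R / 2) R ⊆ Ioi 0 := Ioc_subset_Ioi_self.trans (Ioi_subset_Ioi hR2.le)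
  calc (4 * Real.pi * R) ^ (-q) * Real.exp (-(1 / 2)) * (R / 2 * ν R)
      = (4 * Real.pi * R) ^ (-q) * Real.exp (-(1 / 2)) * ((R - R / 2) * ν R) := by
        rw [sub_half]
    _ ≤ (4 * Real.pi * R) ^ (-q) * Real.exp (-(1 / 2)) * ∫ t in Ioc (R / 2) R, ν t :=
        mul_le_mul_of_nonneg_left (hν.const_le_setIntegral_Ioc hR2 (half_le_self hR.le))
          (by positivity)
    _ = ∫ t in Ioc (R / 2) R, (4 * Real.pi * R) ^ (-q) * Real.exp (-(1 / 2)) * ν t :=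
        (integral_const_mul _ _).symm
    _ ≤ ∫ t in Ioc (R / 2) R, heatKernel q R t * ν t :=
        setIntegral_mono_on
          (((hν.integrableOn_Ioi hR2).mono_set Ioc_subset_Ioi_self).const_mul _)
          (hint.mono_set hsub) measurableSet_Ioc fun t ht => mul_le_mul_of_nonneg_right
            (le_heatKernel hq hR ht.1.le ht.2) (hν.nonneg t (hsub ht))
    _ ≤ subordinateLevyDensity ν q R := by
        refine setIntegral_mono_set hint ?_ hsub.eventuallyLE
        filter_upwards [ae_restrict_mem measurableSet_Ioi] with t ht
        exact mul_nonneg (heatKernel_nonneg q R (le_of_lt ht)) (hν.nonneg t ht)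

lemma subordinateLevyDensity_nonneg (hν : IsDecreasingLevyDensity ν) (q R : ℝ) :
    0 ≤ subordinateLevyDensity ν q R :=
  setIntegral_nonneg measurableSet_Ioi fun t ht =>
    mul_nonneg (heatKernel_nonneg q R (le_of_lt ht)) (hν.nonneg t ht)

lemma subordinateLevyDensity_isBigO (hν : IsDecreasingLevyDensity ν) {G : ℝ → ℝ}
    (hG : LogDecay G) (hS : levySecondDifference ν =O[atTop] fun l => l * G l) (hq : 0 ≤ q) :
    subordinateLevyDensity ν q =O[𝓝[>] 0] fun R => R ^ (-q - 1) * G R⁻¹ := by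
  obtain ⟨A, hA, hνA⟩ := hν.exists_eventually_forall_le_div_sq hG hS
  obtain ⟨B, hB, hSB⟩ := hS.exists_pos
  refine IsBigO.of_bound ((4 * (q + 2)) ^ (q + 2) * A / 2 + 2 ^ q * 9 * B) ?_
  filter_upwards [self_mem_nhdsWithin, tendsto_inv_nhdsGT_zero.eventually hνA,
    tendsto_inv_nhdsGT_zero.eventually hSB.bound,
    tendsto_inv_nhdsGT_zero.eventually hG.eventually_pos] with R hR hνR hSR hGR
  have hR0 : 0 < R := hR
  rw [Real.norm_of_nonneg (hν.levySecondDifference_nonneg _),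
    Real.norm_of_nonneg (by positivity)] at hSR
  rw [Real.norm_of_nonneg (hν.subordinateLevyDensity_nonneg q R),
    Real.norm_of_nonneg (by positivity)]
  have htail : ∫ t in Ioi (R / 2), ν t ≤ 9 * (B * (R⁻¹ * G R⁻¹)) := by
    have hle := hν.setIntegral_Ioi_le (half_pos hR0)
    rw [mul_div_cancel₀ R two_ne_zero] at hle
    linarith
  have hpow_one : R ^ (-q - 1) = R ^ (-q) * R⁻¹ := Real.rpow_sub_one hR0.ne' _
  have hpow_two : R ^ (-(q + 2)) = R ^ (-q) / R ^ 2 := by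
    rw [neg_add', Real.rpow_sub hR0, Real.rpow_two]
  have hpow_half : (R / 2) ^ (-q) = R ^ (-q) * 2 ^ q := by
    rw [Real.div_rpow hR0.le two_pos.le, Real.rpow_neg two_pos.le, div_inv_eq_mul]
  calc subordinateLevyDensity ν q R
      ≤ (4 * (q + 2)) ^ (q + 2) * R ^ (-(q + 2)) * (A * G R⁻¹) * (R / 2) +
          (R / 2) ^ (-q) * ∫ t in Ioi (R / 2), ν t :=
        hν.subordinateLevyDensity_le_add hq hR0 (half_pos hR0) fun t ht htR =>
          hνR t ht (by rw [inv_inv]; linarith)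
    _ ≤ (4 * (q + 2)) ^ (q + 2) * R ^ (-(q + 2)) * (A * G R⁻¹) * (R / 2) +
          (R / 2) ^ (-q) * (9 * (B * (R⁻¹ * G R⁻¹))) := by gcongr
    _ = ((4 * (q + 2)) ^ (q + 2) * A / 2 + 2 ^ q * 9 * B) * (R ^ (-q - 1) * G R⁻¹) := by
        rw [hpow_one, hpow_two, hpow_half]
        field_simp

theorem subordinateLevyDensity_isTheta (hν : IsDecreasingLevyDensity ν) {G : ℝ → ℝ}
    (hG : LogDecay G) (hS : levySecondDifference ν =Θ[atTop] fun l => l * G l) (hq : 0 ≤ q) :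
    subordinateLevyDensity ν q =Θ[𝓝[>] 0] fun R => R ^ (-q - 1) * G R⁻¹ := by
  refine ⟨hν.subordinateLevyDensity_isBigO hG hS.1 hq, ?_⟩
  obtain ⟨A, -, hνA⟩ := hν.exists_eventually_forall_le_div_sq hG hS.1
  have hlower : (fun R => R ^ (-q) * R * ν R) =O[𝓝[>] 0] subordinateLevyDensity ν q := by
    refine IsBigO.of_bound (2 * (4 * Real.pi) ^ q * Real.exp (1 / 2)) ?_
    filter_upwards [self_mem_nhdsWithin, tendsto_inv_nhdsGT_zero.eventually hνA] with R hR hνR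
    have hR0 : 0 < R := hR
    have hνR0 : 0 ≤ ν R := hν.nonneg R hR
    have hle := hν.le_subordinateLevyDensity hq hR0 hR0 fun t ht htR =>
      hνR t ht (by rwa [inv_inv])
    rw [Real.norm_of_nonneg (by positivity),
      Real.norm_of_nonneg (hν.subordinateLevyDensity_nonneg q R)]
    calc R ^ (-q) * R * ν R
        = 2 * (4 * Real.pi) ^ q * Real.exp (1 / 2) *
            ((4 * Real.pi * R) ^ (-q) * Real.exp (-(1 / 2)) * (R / 2 * ν R)) := by
          rw [Real.mul_rpow (by positivity) hR0.le, Real.rpow_neg (by positivity : 0 ≤ 4 * Real.pi),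
            Real.exp_neg]
          field_simp
      _ ≤ _ := by gcongr
  refine (((isBigO_refl (fun R : ℝ => R ^ (-q) * R) _).mul
    (hν.isTheta_of_levySecondDifference_isTheta hG hS).2).congr' ?_ .rfl).trans hlower
  filter_upwards [self_mem_nhdsWithin] with R hR
  rw [Real.rpow_sub_one (ne_of_gt hR)]
  field_simp

end IsDecreasingLevyDensity

end Subordination

lemma exists_forall_mul_le_of_isTheta {f g : ℝ → ℝ} (h : f =Θ[𝓝[>] 0] g)
    (hf : ∀ᶠ r in 𝓝[>] 0, 0 ≤ f r) (hg : ∀ᶠ r in 𝓝[>] 0, 0 ≤ g r) :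
    ∃ c C r₀ : ℝ, 0 < c ∧ c ≤ C ∧ 0 < r₀ ∧ ∀ r, 0 < r → r < r₀ →
      c * g r ≤ f r ∧ f r ≤ C * g r := by
  obtain ⟨C, hfg⟩ := h.1.isBigOWith
  obtain ⟨D, hD, hgf⟩ := h.2.exists_pos
  obtain ⟨r₀, hr₀, hbounds⟩ : ∃ r₀ : ℝ, 0 < r₀ ∧ ∀ r ∈ Ioo 0 r₀,
      D⁻¹ * g r ≤ f r ∧ f r ≤ C * g r ∧ 0 ≤ g r := by
    refine (nhdsGT_basis (0 : ℝ)).eventually_iff.1 ?_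
    filter_upwards [hfg.bound, hgf.bound, hf, hg] with r hfr hgr hfr0 hgr0
    rw [Real.norm_of_nonneg hfr0, Real.norm_of_nonneg hgr0] at hfr hgr
    exact ⟨(inv_mul_le_iff₀ hD).2 hgr, hfr, hgr0⟩
  refine ⟨D⁻¹, max C D⁻¹, r₀, inv_pos.2 hD, le_max_right _ _, hr₀, fun r hr hrr₀ => ?_⟩
  obtain ⟨hlower, hupper, hgr⟩ := hbounds r ⟨hr, hrr₀⟩
  exact ⟨hlower, hupper.trans (mul_le_mul_of_nonneg_right (le_max_left _ _) hgr)⟩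

lemma IsDecreasingLevyDensity.subordinateLevyDensity_sq_isTheta {ν G : ℝ → ℝ} {d : ℝ}
    (hν : IsDecreasingLevyDensity ν) (hG : LogDecay G)
    (hS : levySecondDifference ν =Θ[atTop] fun l => l * G l) (hd : 0 ≤ d) :
    (fun r => subordinateLevyDensity ν (d / 2) (r ^ 2)) =Θ[𝓝[>] 0]
      fun r => r ^ (-d - 2) * G r⁻¹ := by
  have hsq : Tendsto (fun r : ℝ => r ^ 2) (𝓝[>] 0) (𝓝[>] 0) := by
    refine tendsto_nhdsWithin_iff.2 ⟨tendsto_nhdsWithin_of_tendsto_nhds ?_, ?_⟩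
    · simpa using (continuous_pow 2).tendsto (0 : ℝ)
    · filter_upwards [self_mem_nhdsWithin] with r hr using pow_pos (mem_Ioi.1 hr) 2
  have hJ := hν.subordinateLevyDensity_isTheta hG hS (div_nonneg hd two_pos.le)
  have hGsq : (fun r : ℝ => G (r ^ 2)⁻¹) =Θ[𝓝[>] 0] fun r => G r⁻¹ := by
    simp only [← inv_pow]
    exact ⟨hG.sq_isTheta.1.comp_tendsto tendsto_inv_nhdsGT_zero,
      hG.sq_isTheta.2.comp_tendsto tendsto_inv_nhdsGT_zero⟩
  have hpow : (fun r : ℝ => (r ^ 2) ^ (-(d / 2) - 1)) =ᶠ[𝓝[>] 0] fun r => r ^ (-d - 2) := by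
    filter_upwards [self_mem_nhdsWithin] with r hr
    rw [← Real.rpow_two, ← Real.rpow_mul (le_of_lt hr)]
    ring_nf
  exact IsTheta.trans ⟨hJ.1.comp_tendsto hsq, hJ.2.comp_tendsto hsq⟩
    (hpow.isTheta.mul hGsq)

section Conjugate

variable {β κ : ℝ} {n : ℕ} {ν : ℝ → ℝ}

lemma tendsto_div_phiIter_atTop (hβ : 0 < β) (hn : n ≠ 0) :
    Tendsto (fun l => l / phiIter β n l) atTop atTop := by
  obtain ⟨m, rfl⟩ := Nat.exists_eq_succ_of_ne_zero hn
  have hzero := (phiIter_succ_isLittleO_id hβ m).tendsto_div_nhds_zero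
  have hpos : ∀ᶠ l in atTop, 0 < phiIter β (m + 1) l / id l :=
    ((tendsto_phiIter_atTop hβ (m + 1)).eventually_gt_atTop 0).and (eventually_gt_atTop 0)
      |>.mono fun l hl => div_pos hl.1 hl.2
  simpa only [inv_div, id_eq, Pi.inv_def] using
    (tendsto_nhdsWithin_iff.2 ⟨hzero, hpos⟩).inv_tendsto_nhdsGT_zero

lemma isDecreasingLevyDensity_of_conjugate (hβ : 0 < β) (hn : n ≠ 0)
    (hν_nonneg : ∀ t, 0 < t → 0 ≤ ν t) (hν_anti : AntitoneOn ν (Ioi 0))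
    (hν : ∀ l, 0 < l →
      l / phiIter β n l = κ + ∫ t in Ioi (0 : ℝ), (1 - Real.exp (-(l * t))) * ν t) :
    IsDecreasingLevyDensity ν := by
  refine ⟨hν_nonneg, hν_anti, fun l hl => ?_⟩
  obtain ⟨m, hmκ, hlm⟩ := (((tendsto_div_phiIter_atTop hβ hn).eventually_ne_atTop κ).and
    (eventually_ge_atTop l)).exists
  refine integrableOn_one_sub_exp_mul_of_le (aemeasurable_restrict_of_antitoneOn
    measurableSet_Ioi hν_anti).aestronglyMeasurable hl.le hlm ?_
  -- A non-integrable integrand would have integral `0`, forcing `m / φₙ(m) = κ`.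
  by_contra hm
  refine hmκ ?_
  rw [hν m (hl.trans_le hlm), integral_undef hm, add_zero]

lemma levySecondDifference_isTheta_of_conjugate (hβ : 0 < β) (hn : n ≠ 0)
    (hν_density : IsDecreasingLevyDensity ν)
    (hν : ∀ l, 0 < l →
      l / phiIter β n l = κ + ∫ t in Ioi (0 : ℝ), (1 - Real.exp (-(l * t))) * ν t) :
    levySecondDifference ν =Θ[atTop] fun l => l * iterLogRate n l := by
  have hS : levySecondDifference ν =ᶠ[atTop]
      fun l => 2 * (l / phiIter β n l) - 2 * l / phiIter β n (2 * l) + -κ := by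
    filter_upwards [eventually_gt_atTop 0] with l hl
    rw [hν_density.levySecondDifference_eq hl, hν l hl, hν (2 * l) (by positivity)]
    ring
  have hκ : (fun _ => -κ) =o[atTop] fun l => l * iterLogRate n l :=
    isLittleO_const_left.2 (Or.inr (tendsto_norm_atTop_atTop.comp
      (logDecay_iterLogRate hn).tendsto_id_mul_atTop))
  obtain ⟨m, rfl⟩ := Nat.exists_eq_succ_of_ne_zero hn
  exact hS.trans_isTheta ((conjugate_second_difference_isTheta hβ m).add_isLittleO hκ)

end Conjugate

theorem conjugate_iterated_geometric_stable_jump_asymp_general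
    (β : ℝ) (hβ : 0 < β) (n : ℕ) (hn : 1 ≤ n) (κ : ℝ) (ν : ℝ → ℝ)
    (hν_nonneg : ∀ t, 0 < t → 0 ≤ ν t) (hν_anti : AntitoneOn ν (Ioi 0))
    (hν : ∀ l, 0 < l →
      l / phiIter β n l = κ + ∫ t in Ioi (0 : ℝ), (1 - Real.exp (-(l * t))) * ν t)
    (d : ℝ) (hd : 0 ≤ d) (j : ℝ → ℝ)
    (hj : ∀ r, 0 < r → j r =
      ∫ t in Ioi (0 : ℝ), (4 * Real.pi * t) ^ (-d / 2) * Real.exp (-(r ^ 2 / (4 * t))) * ν t) :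
    ∃ c C r₀ : ℝ, 0 < c ∧ c ≤ C ∧ 0 < r₀ ∧ ∀ r, 0 < r → r < r₀ →
      c * (r ^ (-d - 2) / iterLog n (1 / r) ^ 2 *
          ∏ k ∈ Finset.Icc 1 (n - 1), (iterLog k (1 / r))⁻¹) ≤ j r ∧
      j r ≤ C * (r ^ (-d - 2) / iterLog n (1 / r) ^ 2 *
          ∏ k ∈ Finset.Icc 1 (n - 1), (iterLog k (1 / r))⁻¹) := by
  have hn0 : n ≠ 0 := Nat.one_le_iff_ne_zero.1 hn
  have hG : LogDecay (iterLogRate n) := logDecay_iterLogRate hn0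
  have hdensity := isDecreasingLevyDensity_of_conjugate hβ hn0 hν_nonneg hν_anti hν
  have hS := levySecondDifference_isTheta_of_conjugate hβ hn0 hdensity hν
  have hj_eq : ∀ r, 0 < r → j r = subordinateLevyDensity ν (d / 2) (r ^ 2) := fun r hr => by
    simp only [hj r hr, subordinateLevyDensity, heatKernel, neg_div]
  have hrate : ∀ r : ℝ, r ^ (-d - 2) * iterLogRate n r⁻¹ = r ^ (-d - 2) / iterLog n (1 / r) ^ 2 *
      ∏ k ∈ Finset.Icc 1 (n - 1), (iterLog k (1 / r))⁻¹ := fun r => by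
    rw [iterLogRate, inv_pow, ← mul_assoc, ← div_eq_mul_inv, one_div]
  obtain ⟨c, C, r₀, hc, hcC, hr₀, hbounds⟩ := exists_forall_mul_le_of_isTheta
    (hdensity.subordinateLevyDensity_sq_isTheta hG hS hd)
    (Eventually.of_forall fun r => hdensity.subordinateLevyDensity_nonneg _ _) <| by
      filter_upwards [self_mem_nhdsWithin, tendsto_inv_nhdsGT_zero.eventually hG.eventually_pos]
        with r hr hGr using mul_nonneg (Real.rpow_nonneg (le_of_lt hr) _) hGr.le
  refine ⟨c, C, r₀, hc, hcC, hr₀, fun r hr hrr₀ => ?_⟩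
  rw [hj_eq r hr, ← hrate]
  exact hbounds r hr hrr₀

/-- The Lévy density of the subordinate Brownian motion whose subordinator has Laplace
exponent `ψ_n(λ) = λ/φ_n(λ)` (the conjugate of the iterated geometric stable exponent)
satisfies `j(r) ≍ r^{-d-2} (log_n(1/r))^{-2} ∏_{k=1}^{n-1} (log_k(1/r))⁻¹` as `r → 0+`. -/
theorem conjugate_iterated_geometric_stable_jump_asymp
    (β : ℝ) (hβ0 : 0 < β) (hβ2 : β ≤ 2)
    (n : ℕ) (hn : 1 ≤ n)
    (ψ0 : ℝ)
    (hψ0 : Tendsto (fun l => l / phiIter β n l) (𝓝[>] (0:ℝ)) (𝓝 ψ0))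
    (νn : ℝ → ℝ)
    (hνpos : ∀ t, 0 < t → 0 < νn t)
    (hνdec : ∀ s t, 0 < s → s ≤ t → νn t ≤ νn s)
    (hν : ∀ l, 0 < l →
      l / phiIter β n l - ψ0 = ∫ t in Ioi (0:ℝ), (1 - Real.exp (-(l * t))) * νn t)
    (d : ℕ) (hd : 3 ≤ d)
    (j : ℝ → ℝ)
    (hj : ∀ r, 0 < r → j r =
      ∫ t in Ioi (0:ℝ), (4 * Real.pi * t) ^ (-(d:ℝ) / 2) * Real.exp (-(r ^ 2 / (4 * t))) * νn t) :
    ∃ c C r₀ : ℝ, 0 < c ∧ c ≤ C ∧ 0 < r₀ ∧ ∀ r, 0 < r → r < r₀ →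
      c * (r ^ (-(d:ℝ) - 2) / iterLog n (1 / r) ^ 2 *
          ∏ k ∈ Finset.Icc 1 (n - 1), (iterLog k (1 / r))⁻¹) ≤ j r ∧
      j r ≤ C * (r ^ (-(d:ℝ) - 2) / iterLog n (1 / r) ^ 2 *
          ∏ k ∈ Finset.Icc 1 (n - 1), (iterLog k (1 / r))⁻¹) :=
  conjugate_iterated_geometric_stable_jump_asymp_general β hβ0 n hn ψ0 νn
    (fun t ht => (hνpos t ht).le) (fun s hs t _ hst => hνdec s t hs hst)
    (fun l hl => eq_add_of_sub_eq' (hν l hl)) d d.cast_nonneg j hj
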